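/- A continuous function f : (0,∞) → (0,∞) is operator monotone decreasing if and only if f(A ! B) ≥ f(A) # f(B) for every n ∈ ℕ and all n×n positive definite complex matrices A, B. -/

import Mathlib

open Matrix
open scoped ComplexOrder

/-- The Loewner order on matrices: `A ≤ B` iff `B - A` is positive semidefinite. -/
def MLE {n : ℕ} (A B : Matrix (Fin n) (Fin n) ℂ) : Prop := (B - A).PosSemidef

/-- The `t`-weighted harmonic mean `A !_t B = ((1-t)A⁻¹ + tB⁻¹)⁻¹`. -/
noncomputable def wharm {n : ℕ} (t : ℝ) (A B : Matrix (Fin n) (Fin n) ℂ) :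
    Matrix (Fin n) (Fin n) ℂ := ((1 - t) • A⁻¹ + t • B⁻¹)⁻¹

/-- The `t`-weighted arithmetic mean `A ∇_t B = (1-t)A + tB`. -/
noncomputable def warith {n : ℕ} (t : ℝ) (A B : Matrix (Fin n) (Fin n) ℂ) :
    Matrix (Fin n) (Fin n) ℂ := (1 - t) • A + t • B

/-- Real powers of a matrix, via the continuous functional calculus. -/
noncomputable def mpow {n : ℕ} (A : Matrix (Fin n) (Fin n) ℂ) (r : ℝ) :
    Matrix (Fin n) (Fin n) ℂ := cfc (fun x : ℝ => x ^ r) A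

/-- The `t`-weighted geometric mean `A #_t B = A^{1/2} (A^{-1/2} B A^{-1/2})^t A^{1/2}`. -/
noncomputable def wgeom {n : ℕ} (t : ℝ) (A B : Matrix (Fin n) (Fin n) ℂ) :
    Matrix (Fin n) (Fin n) ℂ :=
  mpow A (1/2) * mpow (mpow A (-(1/2)) * B * mpow A (-(1/2))) t * mpow A (1/2)

/-- `f` is operator monotone (increasing): order preserving on positive definite
matrices of every size, via the continuous functional calculus. -/
def OperatorMonotone (f : ℝ → ℝ) : Prop :=
  ∀ (n : ℕ) (A B : Matrix (Fin n) (Fin n) ℂ), A.PosDef → B.PosDef →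
    MLE A B → MLE (cfc f A) (cfc f B)

/-- `f` is operator monotone decreasing: order reversing on positive definite
matrices of every size, via the continuous functional calculus. -/
def OperatorAntitone (f : ℝ → ℝ) : Prop :=
  ∀ (n : ℕ) (A B : Matrix (Fin n) (Fin n) ℂ), A.PosDef → B.PosDef →
    MLE A B → MLE (cfc f B) (cfc f A)

/-!
The involution `f ↦ f(x⁻¹)⁻¹` preserves operator monotone decreasing functions and turns the
inequality `f(A ! B) ≥ f(A) # f(B)` into operator log-convexity `h((A + B) / 2) ≤ h(A) # h(B)`. So
it is enough to show, following Ando and Hiai, that a positive `h` is operator monotone decreasing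
if and only if it is operator log-convex.

If `h` is decreasing, then `1 / h` is operator monotone, hence operator concave: for an isometry
`V` and `c > 1`, the matrix `X` is dominated by a matrix that is block diagonal with respect to the
range of `V`, with `c VᴴXV` as its block there. Concavity, the inequality between the geometric and
arithmetic means, and inversion give log-convexity.

Conversely, an operator log-convex function is operator midpoint convex, and testing on `2 × 2`
matrices shows that it grows at most quadratically. A log-convex scalar function that increases
anywhere grows exponentially, so `h` is decreasing on scalars. For `A ≤ B`, convexity along the ray
`A + 2 ^ k (B - A)`, on which `h` is bounded above, yields `h(B) ≤ h(A)` as `k → ∞`.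
-/

open Polynomial Filter Topology Asymptotics
open scoped MatrixOrder Matrix.Norms.L2Operator

section FunctionalCalculus

variable {𝕜 ι κ : Type*} [RCLike 𝕜] [Fintype ι] [DecidableEq ι] [Fintype κ] [DecidableEq κ]
  {A : Matrix ι ι 𝕜} {B : Matrix κ κ 𝕜} {f : ℝ → ℝ}

lemma continuousOn_real_spectrum (f : ℝ → ℝ) (A : Matrix ι ι 𝕜) :
    ContinuousOn f (spectrum ℝ A) :=
  A.finite_real_spectrum.continuousOn f

lemma exists_polynomial_cfc_eq_aeval (hA : A.IsHermitian) (hB : B.IsHermitian) (f : ℝ → ℝ) :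
    ∃ p : ℝ[X], cfc f A = aeval A p ∧ cfc f B = aeval B p := by
  classical
  let s := (A.finite_real_spectrum.union B.finite_real_spectrum).toFinset
  let p := Lagrange.interpolate s id f
  have eval_p {x : ℝ} (hx : x ∈ spectrum ℝ A ∪ spectrum ℝ B) : f x = p.eval x :=
    (Lagrange.eval_interpolate_at_node f (Set.injOn_id _) (by simpa [s] using hx)).symm
  refine ⟨p, ?_, ?_⟩
  · rw [← cfc_polynomial p A hA.isSelfAdjoint]
    exact cfc_congr fun x hx ↦ eval_p (.inl hx)
  · rw [← cfc_polynomial p B hB.isSelfAdjoint]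
    exact cfc_congr fun x hx ↦ eval_p (.inr hx)

lemma aeval_mul_eq_mul_aeval {V : Matrix ι κ 𝕜} (h : A * V = V * B) (p : ℝ[X]) :
    aeval A p * V = V * aeval B p := by
  have pow_mul_eq (k : ℕ) : A ^ k * V = V * B ^ k := by
    induction k with
    | zero => simp
    | succ k ih => rw [pow_succ, Matrix.mul_assoc, h, ← Matrix.mul_assoc, ih, Matrix.mul_assoc,
        ← pow_succ]
  simp only [aeval_eq_sum_range, Matrix.sum_mul, Matrix.mul_sum, Matrix.smul_mul, Matrix.mul_smul,
    pow_mul_eq]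

theorem cfc_mul_eq_mul_cfc (hA : A.IsHermitian) (hB : B.IsHermitian) {V : Matrix ι κ 𝕜}
    (h : A * V = V * B) (f : ℝ → ℝ) : cfc f A * V = V * cfc f B := by
  obtain ⟨p, hpA, hpB⟩ := exists_polynomial_cfc_eq_aeval hA hB f
  rw [hpA, hpB, aeval_mul_eq_mul_aeval h]

lemma cfc_mul_eq_smul {m : Type*} [Finite m] (hA : A.IsHermitian) {V : Matrix ι m 𝕜} {μ : ℝ}
    (h : A * V = μ • V) (f : ℝ → ℝ) : cfc f A * V = f μ • V := by
  classical
  cases nonempty_fintype m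
  have hμ : (algebraMap ℝ (Matrix m m 𝕜) μ).IsHermitian := IsSelfAdjoint.algebraMap _ (.all μ)
  have comm : A * V = V * algebraMap ℝ (Matrix m m 𝕜) μ := by
    rw [h, Algebra.algebraMap_eq_smul_one, Matrix.mul_smul, Matrix.mul_one]
  rw [cfc_mul_eq_mul_cfc hA hμ comm f, cfc_algebraMap, Algebra.algebraMap_eq_smul_one,
    Matrix.mul_smul, Matrix.mul_one]

lemma cfc_diagonal (f : ℝ → ℝ) (d : ι → ℝ) :
    cfc f (diagonal fun i ↦ (d i : 𝕜)) = diagonal fun i ↦ (f (d i) : 𝕜) := by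
  have hd : (diagonal fun i ↦ (d i : 𝕜)).IsHermitian :=
    isHermitian_diagonal_of_self_adjoint _ (funext fun i ↦ RCLike.conj_ofReal (d i))
  ext i j
  have eigen : (diagonal fun i ↦ (d i : 𝕜)) * single j () (1 : 𝕜) = d j • single j () 1 := by
    ext k
    rcases eq_or_ne k j with rfl | hkj
    · simp [RCLike.real_smul_eq_coe_mul]
    · simp [hkj, hkj.symm]
  have entry := congrFun₂ (cfc_mul_eq_smul hd eigen f) i ()
  rcases eq_or_ne i j with rfl | hij
  · simpa [RCLike.real_smul_eq_coe_mul] using entry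
  · simpa [hij, hij.symm] using entry

lemma cfc_submatrix (hA : A.IsHermitian) (e : κ ≃ ι) (f : ℝ → ℝ) :
    cfc f (A.submatrix e e) = (cfc f A).submatrix e e := by
  obtain ⟨p, hp, hp'⟩ := exists_polynomial_cfc_eq_aeval hA (hA.submatrix e) f
  rw [hp, hp']
  exact aeval_algHom_apply (reindexAlgEquiv ℝ 𝕜 e.symm) A p

lemma cfc_fromBlocks_diagonal (hA : A.IsHermitian) (hB : B.IsHermitian) (f : ℝ → ℝ) :
    cfc f (fromBlocks A 0 0 B) = fromBlocks (cfc f A) 0 0 (cfc f B) := by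
  have hAB : (fromBlocks A 0 0 B).IsHermitian := hA.fromBlocks (by simp) hB
  have left := cfc_mul_eq_mul_cfc hAB hA (V := fromRows 1 0) (by simp [fromBlocks_mul_fromRows]) f
  have right := cfc_mul_eq_mul_cfc hAB hB (V := fromRows 0 1) (by simp [fromBlocks_mul_fromRows]) f
  calc cfc f (fromBlocks A 0 0 B)
      = cfc f (fromBlocks A 0 0 B) * fromCols (fromRows 1 0) (fromRows 0 1) := by
        rw [fromCols_fromRows_eq_fromBlocks, fromBlocks_one, Matrix.mul_one]
    _ = fromBlocks (cfc f A) 0 0 (cfc f B) := by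
        rw [mul_fromCols, left, right]
        simp [fromRows_mul, fromCols_fromRows_eq_fromBlocks]

lemma tendsto_cfc_of_forall_spectrum {α : Type*} {l : Filter α} {F : α → ℝ → ℝ}
    (hA : A.IsHermitian) (hF : ∀ x ∈ spectrum ℝ A, Tendsto (F · x) l (𝓝 (f x))) :
    Tendsto (fun i ↦ cfc (F i) A) l (𝓝 (cfc f A)) := by
  simp only [hA.cfc_eq, Matrix.IsHermitian.cfc, Unitary.conjStarAlgAut_apply]
  refine (Tendsto.const_mul _ ?_).mul_const _
  refine (continuous_id.matrix_diagonal.tendsto _).comp (tendsto_pi_nhds.2 fun i ↦ ?_)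
  exact (RCLike.continuous_ofReal.tendsto _).comp (hF _ (hA.eigenvalues_mem_spectrum_real i))

end FunctionalCalculus

section PosDef

lemma posDef_of_le {ι : Type*} {A B : Matrix ι ι ℂ} (hA : A.PosDef) (h : A ≤ B) :
    B.PosDef := by
  simpa using hA.add_posSemidef (Matrix.le_iff.1 h)

lemma posDef_mul_mul_self {ι : Type*} [Fintype ι] {A B : Matrix ι ι ℂ} (hA : A.PosDef)
    (hB : B.PosDef) : (A * B * A).PosDef := by
  classical
  simpa only [star_eq_conjTranspose, hA.isHermitian.eq] using
    (Matrix.IsUnit.posDef_star_left_conjugate_iff (x := B) hA.isUnit).2 hB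

lemma posDef_fromBlocks_diagonal {ι κ : Type*} [Finite ι] [Finite κ]
    {A : Matrix ι ι ℂ} {B : Matrix κ κ ℂ} (hA : A.PosDef) (hB : B.PosDef) :
    (fromBlocks A 0 0 B).PosDef := by
  classical
  cases nonempty_fintype ι
  cases nonempty_fintype κ
  have hi : Invertible A := hA.isUnit.invertible
  have posSemidef : (fromBlocks A 0 0ᴴ B).PosSemidef :=
    (Matrix.PosDef.fromBlocks₁₁ 0 B hA).2 (by simpa using hB.posSemidef)
  rw [conjTranspose_zero] at posSemidef
  refine posSemidef.posDef_iff_isUnit.2 ((Matrix.isUnit_iff_isUnit_det _).2 ?_)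
  rw [Matrix.det_fromBlocks_zero₂₁]
  exact ((Matrix.isUnit_iff_isUnit_det _).1 hA.isUnit).mul
    ((Matrix.isUnit_iff_isUnit_det _).1 hB.isUnit)

variable {ι : Type*} [Fintype ι] [DecidableEq ι] {A B : Matrix ι ι ℂ} {f g : ℝ → ℝ}

lemma pos_of_mem_spectrum (hA : A.PosDef) {x : ℝ} (hx : x ∈ spectrum ℝ A) : 0 < x :=
  hA.isStrictlyPositive.spectrum_pos hx

lemma cfc_congr_of_posDef (hA : A.PosDef) (h : ∀ x, 0 < x → f x = g x) : cfc f A = cfc g A :=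
  cfc_congr fun x hx ↦ h x (pos_of_mem_spectrum hA hx)

lemma cfc_mono_of_posDef (hA : A.PosDef) (h : ∀ x, 0 < x → f x ≤ g x) : cfc f A ≤ cfc g A :=
  cfc_mono (fun x hx ↦ h x (pos_of_mem_spectrum hA hx)) (continuousOn_real_spectrum f A)
    (continuousOn_real_spectrum g A)

lemma posDef_cfc (hA : A.PosDef) (hf : ∀ x, 0 < x → 0 < f x) : (cfc f A).PosDef := by
  rw [← Matrix.isStrictlyPositive_iff_posDef,
    cfc_isStrictlyPositive_iff f A (continuousOn_real_spectrum f A) hA.isHermitian.isSelfAdjoint]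
  exact fun x hx ↦ hf x (pos_of_mem_spectrum hA hx)

lemma cfc_comp_of_posDef (hA : A.PosDef) (f g : ℝ → ℝ) :
    cfc (fun x ↦ f (g x)) A = cfc f (cfc g A) :=
  cfc_comp' f g A ((A.finite_real_spectrum.image g).continuousOn f)
    (continuousOn_real_spectrum g A) hA.isHermitian.isSelfAdjoint

lemma cfc_inv_of_posDef (hA : A.PosDef) (hf : ∀ x, 0 < x → 0 < f x) :
    cfc (fun x ↦ (f x)⁻¹) A = (cfc f A)⁻¹ := by
  refine (Matrix.inv_eq_right_inv ?_).symm
  rw [← cfc_mul f _ A (continuousOn_real_spectrum _ A) (continuousOn_real_spectrum _ A),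
    cfc_congr_of_posDef hA (g := fun _ ↦ 1) fun x hx ↦ mul_inv_cancel₀ (hf x hx).ne']
  exact cfc_const_one ℝ A hA.isHermitian.isSelfAdjoint

lemma cfc_comp_inv_of_posDef (hA : A.PosDef) (f : ℝ → ℝ) :
    cfc (fun x ↦ f x⁻¹) A = cfc f A⁻¹ := by
  rw [cfc_comp_of_posDef hA f, cfc_inv_of_posDef hA fun _ hx ↦ hx,
    cfc_id' ℝ A hA.isHermitian.isSelfAdjoint]

lemma cfc_comp_smul_of_posDef (hA : A.PosDef) (f : ℝ → ℝ) (c : ℝ) :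
    cfc (fun x ↦ f (c * x)) A = cfc f (c • A) := by
  rw [cfc_comp_of_posDef hA f, cfc_const_mul_id c A hA.isHermitian.isSelfAdjoint]

lemma inv_inv_of_posDef (hA : A.PosDef) : A⁻¹⁻¹ = A :=
  Matrix.nonsing_inv_nonsing_inv A ((Matrix.isUnit_iff_isUnit_det A).1 hA.isUnit)

lemma inv_le_inv_of_posDef (hA : A.PosDef) (h : A ≤ B) : B⁻¹ ≤ A⁻¹ := by
  simpa only [Matrix.nonsing_inv_eq_ringInverse] using
    CStarAlgebra.ringInverse_le_ringInverse h hA.isStrictlyPositive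

lemma inv_le_inv_iff_of_posDef (hA : A.PosDef) (hB : B.PosDef) : A⁻¹ ≤ B⁻¹ ↔ B ≤ A := by
  refine ⟨fun h ↦ ?_, inv_le_inv_of_posDef hB⟩
  simpa only [inv_inv_of_posDef hA, inv_inv_of_posDef hB] using inv_le_inv_of_posDef hA.inv h

lemma posDef_algebraMap {r : ℝ} (hr : 0 < r) : (algebraMap ℝ (Matrix ι ι ℂ) r).PosDef := by
  simpa [Algebra.algebraMap_eq_smul_one] using Matrix.PosDef.one.smul hr

lemma exists_pos_algebraMap_le (hA : A.PosDef) : ∃ a > 0, algebraMap ℝ (Matrix ι ι ℂ) a ≤ A := by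
  cases isEmpty_or_nonempty ι
  · exact ⟨1, one_pos, (Subsingleton.elim _ _).le⟩
  · exact (CFC.exists_pos_algebraMap_le_iff hA.isHermitian.isSelfAdjoint).2
      fun x hx ↦ pos_of_mem_spectrum hA hx

end PosDef

section Means

variable {n : ℕ} {A B : Matrix (Fin n) (Fin n) ℂ} {t : ℝ}

lemma posDef_warith (ht : t ∈ Set.Icc 0 1) (hA : A.PosDef) (hB : B.PosDef) :
    (warith t A B).PosDef := by
  rcases ht.1.eq_or_lt with rfl | ht0
  · simpa [warith] using hA
  · exact .posSemidef_add (hA.posSemidef.smul (sub_nonneg.2 ht.2)) (hB.smul ht0)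

lemma wharm_inv_inv (hA : A.PosDef) (hB : B.PosDef) (t : ℝ) :
    wharm t A⁻¹ B⁻¹ = (warith t A B)⁻¹ := by
  rw [wharm, inv_inv_of_posDef hA, inv_inv_of_posDef hB, warith]

lemma posDef_mpow (hA : A.PosDef) (r : ℝ) : (mpow A r).PosDef :=
  posDef_cfc hA fun _ hx ↦ Real.rpow_pos_of_pos hx r

lemma mpow_mul_mpow (hA : A.PosDef) (r s : ℝ) : mpow A r * mpow A s = mpow A (r + s) := by
  rw [mpow, mpow, mpow,
    ← cfc_mul _ _ A (continuousOn_real_spectrum _ A) (continuousOn_real_spectrum _ A)]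
  exact cfc_congr_of_posDef hA fun x hx ↦ (Real.rpow_add hx r s).symm

lemma mpow_zero (hA : A.PosDef) : mpow A 0 = 1 := by
  simpa [mpow] using cfc_const_one ℝ A hA.isHermitian.isSelfAdjoint

lemma mpow_one (hA : A.PosDef) : mpow A 1 = A := by
  simpa [mpow] using cfc_id' ℝ A hA.isHermitian.isSelfAdjoint

lemma inv_mpow (hA : A.PosDef) (r : ℝ) : (mpow A r)⁻¹ = mpow A⁻¹ r := by
  rw [mpow, mpow, ← cfc_inv_of_posDef hA fun x hx ↦ Real.rpow_pos_of_pos hx r,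
    ← cfc_comp_inv_of_posDef hA]
  exact cfc_congr_of_posDef hA fun x hx ↦ (Real.inv_rpow hx.le r).symm

lemma posDef_wgeom (hA : A.PosDef) (hB : B.PosDef) (t : ℝ) : (wgeom t A B).PosDef :=
  posDef_mul_mul_self (posDef_mpow hA _)
    (posDef_mpow (posDef_mul_mul_self (posDef_mpow hA _) hB) t)

lemma inv_wgeom (hA : A.PosDef) (hB : B.PosDef) (t : ℝ) :
    (wgeom t A B)⁻¹ = wgeom t A⁻¹ B⁻¹ := by
  have hC := posDef_mul_mul_self (posDef_mpow hA (-(1 / 2))) hB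
  rw [wgeom, wgeom, Matrix.mul_inv_rev, Matrix.mul_inv_rev, inv_mpow hC, Matrix.mul_inv_rev,
    Matrix.mul_inv_rev, inv_mpow hA, inv_mpow hA]
  simp only [mul_assoc]

lemma mpow_le_warith_one (ht : t ∈ Set.Icc 0 1) (hA : A.PosDef) : mpow A t ≤ warith t 1 A := by
  have hs := hA.isHermitian.isSelfAdjoint
  have warith_eq_cfc : warith t 1 A = cfc (fun x : ℝ ↦ (1 - t) + t * x) A := by
    rw [cfc_const_add _ _ _ (continuousOn_real_spectrum _ A), cfc_const_mul_id t A hs, warith,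
      Algebra.algebraMap_eq_smul_one]
  rw [warith_eq_cfc]
  refine cfc_mono_of_posDef hA fun x hx ↦ ?_
  simpa using Real.geom_mean_le_arith_mean2_weighted (sub_nonneg.2 ht.2) ht.1 zero_le_one hx.le
    (by ring)

theorem wgeom_le_warith (ht : t ∈ Set.Icc 0 1) (hA : A.PosDef) (hB : B.PosDef) :
    wgeom t A B ≤ warith t A B := by
  have hC := posDef_mul_mul_self (posDef_mpow hA (-(1 / 2))) hB
  have sqrt_mul_sqrt : mpow A (1 / 2) * mpow A (1 / 2) = A := by
    rw [mpow_mul_mpow hA, add_halves, mpow_one hA]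
  have cancel_left : mpow A (1 / 2) * mpow A (-(1 / 2)) = 1 := by
    rw [mpow_mul_mpow hA, add_neg_cancel, mpow_zero hA]
  have cancel_right : mpow A (-(1 / 2)) * mpow A (1 / 2) = 1 := by
    rw [mpow_mul_mpow hA, neg_add_cancel, mpow_zero hA]
  calc wgeom t A B
      ≤ mpow A (1 / 2) * warith t 1 (mpow A (-(1 / 2)) * B * mpow A (-(1 / 2))) *
          mpow A (1 / 2) :=
        (posDef_mpow hA _).isHermitian.isSelfAdjoint.conjugate_le_conjugate
          (mpow_le_warith_one ht hC)
    _ = (1 - t) • (mpow A (1 / 2) * mpow A (1 / 2)) + t •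
          ((mpow A (1 / 2) * mpow A (-(1 / 2))) * B * (mpow A (-(1 / 2)) * mpow A (1 / 2))) := by
        simp only [warith, mul_add, add_mul, mul_smul_comm, smul_mul_assoc, mul_one, mul_assoc]
    _ = warith t A B := by
        rw [sqrt_mul_sqrt, cancel_left, cancel_right, one_mul, mul_one, warith]

lemma wgeom_algebraMap {p q : ℝ} (hp : 0 < p) (hq : 0 < q) (t : ℝ) :
    wgeom t (algebraMap ℝ (Matrix (Fin n) (Fin n) ℂ) p) (algebraMap ℝ _ q) =
      algebraMap ℝ _ (p ^ (1 - t) * q ^ t) := by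
  simp only [wgeom, mpow, cfc_algebraMap, ← map_mul]
  congr 1
  rw [Real.mul_rpow (by positivity) (by positivity), Real.mul_rpow (by positivity) hq.le,
    ← Real.rpow_mul hp.le]
  calc p ^ (1 / 2 : ℝ) * (p ^ (-(1 / 2) * t) * q ^ t * p ^ (-(1 / 2) * t)) * p ^ (1 / 2 : ℝ)
      = p ^ (1 / 2 : ℝ) * p ^ (-(1 / 2) * t) * p ^ (-(1 / 2) * t) * p ^ (1 / 2 : ℝ) * q ^ t := by
        ring
    _ = p ^ (1 - t) * q ^ t := by
        simp only [← Real.rpow_add hp]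
        ring_nf

end Means

section Jensen

variable {ι κ : Type*} [Fintype ι] [DecidableEq ι] [Fintype κ] [DecidableEq κ] {g : ℝ → ℝ}

lemma OperatorMonotone.cfc_le_cfc (hg : OperatorMonotone g) {A B : Matrix ι ι ℂ}
    (hA : A.PosDef) (h : A ≤ B) : cfc g A ≤ cfc g B := by
  have hB := posDef_of_le hA h
  let e := (Fintype.equivFin ι).symm
  have submatrix_le : A.submatrix e e ≤ B.submatrix e e := (Matrix.le_iff.1 h).submatrix e
  have key := hg _ _ _ (hA.submatrix e.injective) (hB.submatrix e.injective) submatrix_le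
  rw [MLE, cfc_submatrix hA.isHermitian, cfc_submatrix hB.isHermitian] at key
  exact Matrix.le_iff.2 ((Matrix.posSemidef_submatrix_equiv e).1 key)

lemma le_smul_conj_add_smul_conj {X P : Matrix ι ι ℂ} (hX : X.PosSemidef) (hP : P.IsHermitian)
    {ε : ℝ} (hε : 0 < ε) :
    X ≤ (1 + ε) • (P * X * P) + (1 + ε⁻¹) • ((1 - P) * X * (1 - P)) := by
  have hS : (ε • P - (1 - P)).IsHermitian :=
    (hP.smul (IsSelfAdjoint.all ε)).sub (Matrix.isHermitian_one.sub hP)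
  have hSXS := (hX.conjTranspose_mul_mul_same (ε • P - (1 - P))).smul (inv_nonneg.2 hε.le)
  rw [hS.eq] at hSXS
  have sub_eq : (1 + ε) • (P * X * P) + (1 + ε⁻¹) • ((1 - P) * X * (1 - P)) - X =
      ε⁻¹ • ((ε • P - (1 - P)) * X * (ε • P - (1 - P))) := by
    simp only [mul_sub, sub_mul, mul_one, one_mul, smul_mul_assoc, mul_smul_comm]
    match_scalars <;> field_simp <;> ring
  rwa [Matrix.le_iff, sub_eq]

lemma exists_le_smul_conj_add_smul {X : Matrix ι ι ℂ} (hX : X.PosSemidef) {V : Matrix ι κ ℂ}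
    (hV : Vᴴ * V = 1) {c : ℝ} (hc : 1 < c) :
    ∃ r : ℝ, X ≤ c • (V * (Vᴴ * X * V) * Vᴴ) + r • (1 - V * Vᴴ) := by
  have hP : (V * Vᴴ).IsHermitian := Matrix.isHermitian_mul_conjTranspose_self V
  have hQ : (1 - V * Vᴴ).IsHermitian := Matrix.isHermitian_one.sub hP
  have Q_mul_Q : (1 - V * Vᴴ) * (1 - V * Vᴴ) = 1 - V * Vᴴ := by
    have P_mul_P : V * Vᴴ * (V * Vᴴ) = V * Vᴴ := by
      rw [Matrix.mul_assoc, ← Matrix.mul_assoc Vᴴ, hV, Matrix.one_mul]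
    exact (IsIdempotentElem.one_sub P_mul_P).eq
  have X_le : X ≤ algebraMap ℝ _ ‖X‖ := hX.isHermitian.isSelfAdjoint.le_algebraMap_norm_self
  have QXQ_le : (1 - V * Vᴴ) * X * (1 - V * Vᴴ) ≤ ‖X‖ • (1 - V * Vᴴ) := by
    simpa only [Algebra.algebraMap_eq_smul_one, mul_smul_comm, smul_mul_assoc, mul_one, Q_mul_Q]
      using hQ.isSelfAdjoint.conjugate_le_conjugate X_le
  have hε : 0 < c - 1 := sub_pos.2 hc
  refine ⟨(1 + (c - 1)⁻¹) * ‖X‖, ?_⟩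
  calc X ≤ (1 + (c - 1)) • (V * Vᴴ * X * (V * Vᴴ)) +
          (1 + (c - 1)⁻¹) • ((1 - V * Vᴴ) * X * (1 - V * Vᴴ)) :=
        le_smul_conj_add_smul_conj hX hP hε
    _ ≤ (1 + (c - 1)) • (V * Vᴴ * X * (V * Vᴴ)) +
          (1 + (c - 1)⁻¹) • (‖X‖ • (1 - V * Vᴴ)) := by gcongr
    _ = c • (V * (Vᴴ * X * V) * Vᴴ) + ((1 + (c - 1)⁻¹) * ‖X‖) • (1 - V * Vᴴ) := by
        rw [add_sub_cancel, smul_smul]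
        simp only [Matrix.mul_assoc]

theorem OperatorMonotone.conjTranspose_mul_cfc_mul_le (hg : OperatorMonotone g)
    {X : Matrix ι ι ℂ} (hX : X.PosDef) {V : Matrix ι κ ℂ} (hV : Vᴴ * V = 1) {c : ℝ} (hc : 1 < c) :
    Vᴴ * cfc g X * V ≤ cfc g (c • (Vᴴ * X * V)) := by
  obtain ⟨r, hXZ⟩ := exists_le_smul_conj_add_smul hX.posSemidef hV hc
  set W := Vᴴ * X * V
  set Z := c • (V * W * Vᴴ) + r • (1 - V * Vᴴ)
  have hW : (c • W).IsHermitian :=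
    (Matrix.isHermitian_conjTranspose_mul_mul V hX.isHermitian).smul (IsSelfAdjoint.all c)
  have hZ : Z.IsHermitian := (posDef_of_le hX hXZ).isHermitian
  have Z_mul_V : Z * V = V * c • W := by
    simp only [Z, Matrix.add_mul, Matrix.sub_mul, Matrix.smul_mul, Matrix.mul_smul,
      Matrix.mul_assoc, hV, Matrix.mul_one, Matrix.one_mul, sub_self, smul_zero, add_zero]
  have conj_le : Vᴴ * cfc g X * V ≤ Vᴴ * cfc g Z * V := by
    rw [Matrix.le_iff, ← Matrix.sub_mul, ← Matrix.mul_sub]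
    exact (Matrix.le_iff.1 (hg.cfc_le_cfc hX hXZ)).conjTranspose_mul_mul_same V
  rwa [Matrix.mul_assoc Vᴴ (cfc g Z), cfc_mul_eq_mul_cfc hZ hW Z_mul_V, ← Matrix.mul_assoc, hV,
    Matrix.one_mul] at conj_le

variable {n : ℕ} {A B : Matrix (Fin n) (Fin n) ℂ} {t : ℝ}

/-- The isometry `x ↦ (√(1 - t) x, √t x)` of `ℂⁿ` into `ℂⁿ ⊕ ℂⁿ`, which exhibits weighted
arithmetic means as compressions of block diagonal matrices. -/
noncomputable def weightedDiagonal (n : ℕ) (t : ℝ) : Matrix (Fin n ⊕ Fin n) (Fin n) ℂ :=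
  fromRows (√(1 - t) • 1) (√t • 1)

lemma weightedDiagonal_conj_fromBlocks (ht : t ∈ Set.Icc 0 1) (A B : Matrix (Fin n) (Fin n) ℂ) :
    (weightedDiagonal n t)ᴴ * fromBlocks A 0 0 B * weightedDiagonal n t = warith t A B := by
  rw [weightedDiagonal, conjTranspose_fromRows_eq_fromCols_conjTranspose, fromCols_mul_fromBlocks,
    fromCols_mul_fromRows]
  simp [warith, smul_smul, Real.mul_self_sqrt, ht.1, ht.2, sub_nonneg]

lemma weightedDiagonal_isometry (ht : t ∈ Set.Icc 0 1) :
    (weightedDiagonal n t)ᴴ * weightedDiagonal n t = 1 := by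
  simpa [warith, fromBlocks_one, ← add_smul] using
    weightedDiagonal_conj_fromBlocks ht (1 : Matrix (Fin n) (Fin n) ℂ) 1

lemma OperatorMonotone.warith_cfc_le_cfc_smul (hg : OperatorMonotone g) (ht : t ∈ Set.Icc 0 1)
    (hA : A.PosDef) (hB : B.PosDef) {c : ℝ} (hc : 1 < c) :
    warith t (cfc g A) (cfc g B) ≤ cfc g (c • warith t A B) := by
  have key := hg.conjTranspose_mul_cfc_mul_le (posDef_fromBlocks_diagonal hA hB)
    (weightedDiagonal_isometry ht) hc
  rwa [cfc_fromBlocks_diagonal hA.isHermitian hB.isHermitian,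
    weightedDiagonal_conj_fromBlocks ht, weightedDiagonal_conj_fromBlocks ht] at key

lemma warith_algebraMap (t p q : ℝ) :
    warith t (algebraMap ℝ (Matrix (Fin n) (Fin n) ℂ) p) (algebraMap ℝ _ q) =
      algebraMap ℝ _ ((1 - t) * p + t * q) := by
  simp only [warith, Algebra.algebraMap_eq_smul_one, smul_smul, add_smul]

lemma OperatorMonotone.mul_add_mul_le_of_lt (hg : OperatorMonotone g) (ht : t ∈ Set.Icc 0 1)
    {x y z : ℝ} (hx : 0 < x) (hy : 0 < y) (hz : (1 - t) * x + t * y < z) :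
    (1 - t) * g x + t * g y ≤ g z := by
  have mean_pos : 0 < (1 - t) * x + t * y := by
    rcases ht.1.eq_or_lt with rfl | ht0
    · simpa using hx
    · nlinarith [mul_pos ht0 hy, mul_nonneg (sub_nonneg.2 ht.2) hx.le]
  have key := hg.warith_cfc_le_cfc_smul ht (posDef_algebraMap (ι := Fin 1) hx)
    (posDef_algebraMap hy) ((one_lt_div mean_pos).2 hz)
  simpa only [cfc_algebraMap, warith_algebraMap, Algebra.smul_def, ← map_mul,
    div_mul_cancel₀ z mean_pos.ne', algebraMap_le_algebraMap] using key

theorem OperatorMonotone.concaveOn (hg : OperatorMonotone g) : ConcaveOn ℝ (Set.Ioi 0) g := by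
  refine LinearOrder.concaveOn_of_lt (convex_Ioi 0) fun x hx y hy hxy a b ha hb hab ↦ ?_
  obtain rfl : a = 1 - b := eq_sub_of_add_eq hab
  have limit : Tendsto (fun t : ℝ ↦ (1 - t) * g x + t * g y) (𝓝[<] b)
      (𝓝 ((1 - b) * g x + b * g y)) :=
    ((by fun_prop : Continuous fun t : ℝ ↦ (1 - t) * g x + t * g y).tendsto b).mono_left
      nhdsWithin_le_nhds
  refine le_of_tendsto limit ?_
  filter_upwards [Ioo_mem_nhdsLT hb] with t ht
  exact hg.mul_add_mul_le_of_lt ⟨ht.1.le, by linarith [ht.2]⟩ hx hy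
    (by simp only [smul_eq_mul]; nlinarith [ht.2])

lemma OperatorMonotone.continuousOn (hg : OperatorMonotone g) : ContinuousOn g (Set.Ioi 0) :=
  hg.concaveOn.continuousOn isOpen_Ioi

theorem OperatorMonotone.warith_cfc_le_cfc_warith (hg : OperatorMonotone g)
    (ht : t ∈ Set.Icc 0 1) (hA : A.PosDef) (hB : B.PosDef) :
    warith t (cfc g A) (cfc g B) ≤ cfc g (warith t A B) := by
  have hW := posDef_warith ht hA hB
  have limit : Tendsto (fun c : ℝ ↦ cfc g (c • warith t A B)) (𝓝[>] 1)
      (𝓝 (cfc g (warith t A B))) := by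
    simp only [← cfc_comp_smul_of_posDef hW]
    refine tendsto_cfc_of_forall_spectrum hW.isHermitian fun x hx ↦ ?_
    have tendsto_mul : Tendsto (fun c : ℝ ↦ c * x) (𝓝[>] 1) (𝓝 x) := by
      simpa only [one_mul] using
        ((continuous_mul_const x).tendsto 1).mono_left nhdsWithin_le_nhds
    exact (hg.continuousOn.continuousAt
      (Ioi_mem_nhds (pos_of_mem_spectrum hW hx))).tendsto.comp tendsto_mul
  refine ge_of_tendsto limit ?_
  filter_upwards [self_mem_nhdsWithin] with c hc
  exact hg.warith_cfc_le_cfc_smul ht hA hB hc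

end Jensen

section ScalarGrowth

lemma geom_le_of_sq_le_mul {u : ℕ → ℝ} (hu : ∀ k, 0 < u k)
    (h : ∀ k, u (k + 1) ^ 2 ≤ u k * u (k + 2)) (k : ℕ) : u 0 * (u 1 / u 0) ^ k ≤ u k := by
  have ratio_le (k : ℕ) : u 1 / u 0 * u k ≤ u (k + 1) := by
    induction k with
    | zero => exact (div_mul_cancel₀ _ (hu 0).ne').le
    | succ k ih =>
      refine le_of_mul_le_mul_left ?_ (hu k)
      calc u k * (u 1 / u 0 * u (k + 1)) = u 1 / u 0 * u k * u (k + 1) := by ring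
        _ ≤ u (k + 1) * u (k + 1) := by gcongr; exact (hu _).le
        _ = u (k + 1) ^ 2 := (sq _).symm
        _ ≤ u k * u (k + 2) := h k
  induction k with
  | zero => simp
  | succ k ih =>
    have ratio_nonneg : 0 ≤ u 1 / u 0 := (div_pos (hu 1) (hu 0)).le
    calc u 0 * (u 1 / u 0) ^ (k + 1) = u 1 / u 0 * (u 0 * (u 1 / u 0) ^ k) := by ring
      _ ≤ u 1 / u 0 * u k := by gcongr
      _ ≤ u (k + 1) := ratio_le k

variable {h : ℝ → ℝ}

lemma geom_le_add_nat_mul_of_sq_le_mul (hpos : ∀ x, 0 < x → 0 < h x)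
    (hlog : ∀ x y, 0 < x → 0 < y → h ((x + y) / 2) ^ 2 ≤ h x * h y) {a b : ℝ} (ha : 0 < a)
    (hab : a ≤ b) (k : ℕ) : h a * (h b / h a) ^ k ≤ h (a + k * (b - a)) := by
  let p (k : ℕ) : ℝ := a + k * (b - a)
  have p_pos (k : ℕ) : 0 < p k := by
    have := mul_nonneg k.cast_nonneg (sub_nonneg.2 hab)
    positivity
  have hlog_p (k : ℕ) : h (p (k + 1)) ^ 2 ≤ h (p k) * h (p (k + 2)) := by
    convert hlog _ _ (p_pos k) (p_pos (k + 2)) using 3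
    simp only [p]
    push_cast
    ring
  simpa [p] using geom_le_of_sq_le_mul (fun k ↦ hpos _ (p_pos k)) hlog_p k

theorem antitoneOn_Ioi_of_sq_le_mul_of_isBigO (hpos : ∀ x, 0 < x → 0 < h x)
    (hlog : ∀ x y, 0 < x → 0 < y → h ((x + y) / 2) ^ 2 ≤ h x * h y) {m : ℕ}
    (hO : h =O[atTop] fun x ↦ x ^ m) : AntitoneOn h (Set.Ioi 0) := by
  intro a ha b hb hab
  by_contra! hlt
  have hd : 0 < b - a := sub_pos.2 (hab.lt_of_ne fun heq ↦ hlt.ne (heq ▸ rfl))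
  have hr : 0 < h b / h a := div_pos (hpos b hb) (hpos a ha)
  let p (k : ℕ) : ℝ := a + k * (b - a)
  have geom_isBigO : (fun k : ℕ ↦ (h b / h a) ^ k) =O[atTop] (h ∘ p) := by
    refine IsBigO.of_bound (h a)⁻¹ (.of_forall fun k ↦ ?_)
    rw [Real.norm_of_nonneg (by positivity), le_inv_mul_iff₀ (hpos a ha)]
    exact (geom_le_add_nat_mul_of_sq_le_mul hpos hlog ha hab k).trans (Real.le_norm_self _)
  have p_tendsto : Tendsto p atTop atTop :=
    tendsto_atTop_add_const_left _ _ (tendsto_natCast_atTop_atTop.atTop_mul_const hd)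
  have p_isBigO : p =O[atTop] fun k : ℕ ↦ (k : ℝ) :=
    (isLittleO_const_left.2
      (.inr (tendsto_norm_atTop_atTop.comp tendsto_natCast_atTop_atTop))).isBigO.add
      ((isBigO_const_mul_self (b - a) _ _).congr_left fun _ ↦ mul_comm _ _)
  have pow_isLittleO : (fun k : ℕ ↦ (k : ℝ) ^ m) =o[atTop] fun k ↦ (h b / h a) ^ k :=
    isLittleO_pow_const_const_pow_of_one_lt m ((one_lt_div (hpos a ha)).2 hlt)
  have geom_isLittleO_self :=
    ((geom_isBigO.trans (hO.comp_tendsto p_tendsto)).trans (p_isBigO.pow m)).trans_isLittleO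
      pow_isLittleO
  exact isLittleO_irrefl (.of_forall fun k ↦ pow_ne_zero k hr.ne') geom_isLittleO_self

end ScalarGrowth

section LogConvex

/-- Operator log-convexity in the sense of Ando and Hiai, in midpoint form:
`h((A + B) / 2) ≤ h(A) # h(B)` for positive definite matrices of every size. -/
def OperatorLogConvex (h : ℝ → ℝ) : Prop :=
  ∀ (n : ℕ) (A B : Matrix (Fin n) (Fin n) ℂ), A.PosDef → B.PosDef →
    cfc h (warith 2⁻¹ A B) ≤ wgeom 2⁻¹ (cfc h A) (cfc h B)

/-- Midpoint operator convexity on positive definite matrices of every size: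
`h((A + B) / 2) ≤ (h(A) + h(B)) / 2`. -/
def OperatorMidpointConvex (h : ℝ → ℝ) : Prop :=
  ∀ (n : ℕ) (A B : Matrix (Fin n) (Fin n) ℂ), A.PosDef → B.PosDef →
    cfc h (warith 2⁻¹ A B) ≤ warith 2⁻¹ (cfc h A) (cfc h B)

variable {h : ℝ → ℝ}

lemma two_inv_mem_Icc : (2⁻¹ : ℝ) ∈ Set.Icc 0 1 := by norm_num

lemma OperatorAntitone.operatorMonotone_inv (hh : OperatorAntitone h)
    (hpos : ∀ x, 0 < x → 0 < h x) : OperatorMonotone fun x ↦ (h x)⁻¹ := by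
  intro n A B hA hB hAB
  rw [cfc_inv_of_posDef hA hpos, cfc_inv_of_posDef hB hpos]
  exact inv_le_inv_of_posDef (posDef_cfc hB hpos) (hh n A B hA hB hAB)

theorem OperatorAntitone.operatorLogConvex (hh : OperatorAntitone h)
    (hpos : ∀ x, 0 < x → 0 < h x) : OperatorLogConvex h := by
  intro n A B hA hB
  have hA' := posDef_cfc hA hpos
  have hB' := posDef_cfc hB hpos
  have hW := posDef_warith two_inv_mem_Icc hA hB
  rw [← inv_le_inv_iff_of_posDef (posDef_wgeom hA' hB' _) (posDef_cfc hW hpos)]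
  calc (wgeom 2⁻¹ (cfc h A) (cfc h B))⁻¹
      = wgeom 2⁻¹ (cfc h A)⁻¹ (cfc h B)⁻¹ := inv_wgeom hA' hB' _
    _ ≤ warith 2⁻¹ (cfc h A)⁻¹ (cfc h B)⁻¹ := wgeom_le_warith two_inv_mem_Icc hA'.inv hB'.inv
    _ ≤ (cfc h (warith 2⁻¹ A B))⁻¹ := by
        rw [← cfc_inv_of_posDef hA hpos, ← cfc_inv_of_posDef hB hpos, ← cfc_inv_of_posDef hW hpos]
        exact (hh.operatorMonotone_inv hpos).warith_cfc_le_cfc_warith two_inv_mem_Icc hA hB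

lemma OperatorLogConvex.operatorMidpointConvex (hh : OperatorLogConvex h)
    (hpos : ∀ x, 0 < x → 0 < h x) : OperatorMidpointConvex h :=
  fun n A B hA hB ↦ (hh n A B hA hB).trans
    (wgeom_le_warith two_inv_mem_Icc (posDef_cfc hA hpos) (posDef_cfc hB hpos))

lemma OperatorLogConvex.sq_le_mul (hh : OperatorLogConvex h) (hpos : ∀ x, 0 < x → 0 < h x)
    {x y : ℝ} (hx : 0 < x) (hy : 0 < y) : h ((x + y) / 2) ^ 2 ≤ h x * h y := by
  have key := hh 1 _ _ (posDef_algebraMap hx) (posDef_algebraMap hy)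
  rw [warith_algebraMap, cfc_algebraMap, cfc_algebraMap, cfc_algebraMap,
    wgeom_algebraMap (hpos x hx) (hpos y hy), algebraMap_le_algebraMap] at key
  have hx' := hpos x hx
  have hy' := hpos y hy
  calc h ((x + y) / 2) ^ 2 = h ((1 - 2⁻¹) * x + 2⁻¹ * y) ^ 2 := by ring_nf
    _ ≤ (h x ^ (1 - 2⁻¹ : ℝ) * h y ^ (2⁻¹ : ℝ)) ^ 2 := by
        gcongr
        exact (hpos _ (by linarith)).le
    _ = h x * h y := by
        rw [mul_pow, ← Real.rpow_mul_natCast hx'.le, ← Real.rpow_mul_natCast hy'.le]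
        norm_num

lemma smul_le_of_mul_eq_smul {ι : Type*} [Fintype ι] {K P : Matrix ι ι ℂ}
    (hK : 0 ≤ K) (hP : IsStarProjection P) {c : ℝ} (h : K * P = c • P) : c • P ≤ K := by
  classical
  have P_mul_K : P * K = c • P := by
    simpa [hP.isSelfAdjoint.star_eq, (IsSelfAdjoint.of_nonneg hK).star_eq] using congrArg star h
  have P_mul_P : P * P = P := hP.isIdempotentElem
  have conj_eq : (1 - P) * K * (1 - P) = K - c • P := by
    simp only [mul_sub, sub_mul, one_mul, mul_one, h, P_mul_K, smul_mul_assoc, P_mul_P]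
    abel
  rw [← sub_nonneg, ← conj_eq]
  exact hP.one_sub.isSelfAdjoint.conjugate_nonneg hK

lemma smul_le_cfc_of_mul_eq_smul {ι : Type*} [Fintype ι] [DecidableEq ι] {Z P : Matrix ι ι ℂ}
    (hZ : Z.PosDef) (hP : IsStarProjection P) {μ : ℝ} (hμ : Z * P = μ • P)
    (hpos : ∀ x, 0 < x → 0 < h x) : h μ • P ≤ cfc h Z :=
  smul_le_of_mul_eq_smul (posDef_cfc hZ hpos).posSemidef.nonneg hP
    (cfc_mul_eq_smul hZ.isHermitian hμ h)

/-- The orthogonal projection of `ℂ²` onto the line spanned by `(y, 1)`. -/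
noncomputable def lineProjection (y : ℝ) : Matrix (Fin 2) (Fin 2) ℂ :=
  (y ^ 2 + 1)⁻¹ • !![(y ^ 2 : ℂ), y; y, 1]

lemma isStarProjection_lineProjection (y : ℝ) : IsStarProjection (lineProjection y) := by
  have ne_zero : (y ^ 2 + 1 : ℂ) ≠ 0 := mod_cast (by positivity : (y ^ 2 + 1 : ℝ) ≠ 0)
  refine ⟨?_, ?_⟩
  · ext i j
    fin_cases i <;> fin_cases j <;> simp [lineProjection, Matrix.mul_apply] <;> field_simp
  · ext i j
    fin_cases i <;> fin_cases j <;> simp [lineProjection]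

lemma re_lineProjection_one_one (y : ℝ) : (lineProjection y 1 1).re = (y ^ 2 + 1)⁻¹ := by
  rw [lineProjection, Matrix.smul_apply, Complex.smul_re]
  simp

-- The corner `y + 1 - y⁻¹` makes `(y, 1)` an eigenvector; the other corner is independent of `y`.
lemma warith_mul_lineProjection {y : ℝ} (hy : y ≠ 0) :
    warith 2⁻¹ (diagonal fun i ↦ ((![y + 1 - y⁻¹, 1] i : ℝ) : ℂ)) !![2, 1; 1, 2] *
      lineProjection y = ((y + 3) / 2) • lineProjection y := by
  have hy' : (y : ℂ) ≠ 0 := mod_cast hy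
  ext i j
  fin_cases i <;> fin_cases j <;>
    simp [lineProjection, warith, Matrix.mul_apply] <;> field_simp <;> ring

lemma OperatorMidpointConvex.exists_le_mul_sq (hh : OperatorMidpointConvex h)
    (hpos : ∀ x, 0 < x → 0 < h x) :
    ∃ C : ℝ, ∀ y ≥ 1, h ((y + 3) / 2) ≤ C * (y ^ 2 + 1) := by
  have hY : (!![2, 1; 1, 2] : Matrix (Fin 2) (Fin 2) ℂ).PosDef := by
    convert Matrix.PosDef.one.add_posSemidef (posSemidef_vecMulVec_self_star ![(1 : ℂ), 1])
    ext i j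
    fin_cases i <;> fin_cases j <;> norm_num [vecMulVec]
  refine ⟨2⁻¹ * (h 1 + (cfc h (!![2, 1; 1, 2] : Matrix (Fin 2) (Fin 2) ℂ) 1 1).re), fun y hy ↦ ?_⟩
  have hX : (diagonal fun i ↦ ((![y + 1 - y⁻¹, 1] i : ℝ) : ℂ)).PosDef := by
    refine .diagonal fun i ↦ ?_
    have := inv_le_one_of_one_le₀ hy
    fin_cases i
    · simp only [Fin.zero_eta, cons_val_zero, Complex.zero_lt_real]
      linarith
    · simp
  have projection_le := (smul_le_cfc_of_mul_eq_smul (posDef_warith two_inv_mem_Icc hX hY)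
    (isStarProjection_lineProjection y) (warith_mul_lineProjection (by positivity)) hpos).trans
    (hh 2 _ _ hX hY)
  have entry_le : h ((y + 3) / 2) * (y ^ 2 + 1)⁻¹ ≤
      2⁻¹ * (h 1 + (cfc h (!![2, 1; 1, 2] : Matrix (Fin 2) (Fin 2) ℂ) 1 1).re) := by
    have cfc_X : cfc h (diagonal fun i ↦ ((![y + 1 - y⁻¹, 1] i : ℝ) : ℂ)) =
        diagonal fun i ↦ ((h (![y + 1 - y⁻¹, 1] i) : ℝ) : ℂ) := cfc_diagonal h _
    have := (Complex.le_def.1 ((Matrix.le_iff.1 projection_le).diag_nonneg (i := 1))).1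
    simp only [warith, cfc_X, Matrix.sub_apply, Matrix.add_apply, Matrix.smul_apply,
      diagonal_apply_eq, cons_val_one, cons_val_fin_one, Complex.sub_re, Complex.add_re,
      Complex.smul_re, Complex.ofReal_re, Complex.zero_re, smul_eq_mul,
      re_lineProjection_one_one] at this
    linarith
  exact (mul_inv_le_iff₀ (by positivity)).1 entry_le

lemma OperatorMidpointConvex.isBigO_sq (hh : OperatorMidpointConvex h)
    (hpos : ∀ x, 0 < x → 0 < h x) : h =O[atTop] fun x ↦ x ^ 2 := by
  obtain ⟨C, hC⟩ := hh.exists_le_mul_sq hpos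
  have C_nonneg : 0 ≤ C := by
    have := (hpos _ (by norm_num)).trans_le (hC 1 le_rfl)
    linarith
  refine IsBigO.of_bound (4 * C) ?_
  filter_upwards [eventually_ge_atTop 2] with x hx
  have key := hC (2 * x - 3) (by linarith)
  rw [sub_add_cancel, mul_div_cancel_left₀ x two_ne_zero] at key
  rw [Real.norm_of_nonneg (hpos x (by linarith)).le, Real.norm_of_nonneg (sq_nonneg x)]
  calc h x ≤ C * ((2 * x - 3) ^ 2 + 1) := key
    _ ≤ C * (4 * x ^ 2) := by gcongr; nlinarith
    _ = 4 * C * x ^ 2 := by ring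

lemma OperatorMidpointConvex.cfc_warith_pow_le (hh : OperatorMidpointConvex h) {n : ℕ}
    {A B : Matrix (Fin n) (Fin n) ℂ} (hA : A.PosDef) (hB : B.PosDef) (k : ℕ) :
    cfc h (warith (2⁻¹ ^ k) A B) ≤ warith (2⁻¹ ^ k) (cfc h A) (cfc h B) := by
  have warith_succ (k : ℕ) (A B : Matrix (Fin n) (Fin n) ℂ) :
      warith (2⁻¹ ^ (k + 1)) A B = warith 2⁻¹ A (warith (2⁻¹ ^ k) A B) := by
    simp only [warith, pow_succ]
    module
  induction k with
  | zero => simp [warith]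
  | succ k ih =>
    have hW : (warith (2⁻¹ ^ k) A B).PosDef :=
      posDef_warith ⟨by positivity, pow_le_one₀ (by norm_num) (by norm_num)⟩ hA hB
    rw [warith_succ, warith_succ]
    refine (hh n A _ hA hW).trans ?_
    unfold warith at ih ⊢
    gcongr

lemma cfc_le_algebraMap_of_antitoneOn {ι : Type*} [Fintype ι] [DecidableEq ι]
    {A : Matrix ι ι ℂ} (hA : A.IsHermitian) {a : ℝ} (ha : 0 < a) (haA : algebraMap ℝ _ a ≤ A)
    (hh : AntitoneOn h (Set.Ioi 0)) : cfc h A ≤ algebraMap ℝ _ (h a) := by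
  have le_spectrum := (algebraMap_le_iff_le_spectrum (R := ℝ) hA.isSelfAdjoint).1 haA
  exact cfc_le_algebraMap h (h a) A
    (fun x hx ↦ hh ha (ha.trans_le (le_spectrum x hx)) (le_spectrum x hx))
    (continuousOn_real_spectrum h A) hA.isSelfAdjoint

theorem OperatorMidpointConvex.operatorAntitone (hh : OperatorMidpointConvex h)
    (hanti : AntitoneOn h (Set.Ioi 0)) : OperatorAntitone h := by
  intro n A B hA _ (hAB : A ≤ B)
  obtain ⟨a, ha, haA⟩ := exists_pos_algebraMap_le hA
  let Y (k : ℕ) := A + (2 : ℝ) ^ k • (B - A)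
  have A_le_Y (k : ℕ) : A ≤ Y k :=
    le_add_of_nonneg_right (smul_nonneg (by positivity) (sub_nonneg.2 hAB))
  have hY (k : ℕ) : (Y k).PosDef := posDef_of_le hA (A_le_Y k)
  have warith_A_Y (k : ℕ) : warith (2⁻¹ ^ k) A (Y k) = B := by
    have : (2⁻¹ : ℝ) ^ k * 2 ^ k = 1 := by rw [← mul_pow]; norm_num
    simp only [warith, Y, smul_add, smul_smul, this]
    module
  have bound (k : ℕ) : cfc h B ≤ warith (2⁻¹ ^ k) (cfc h A) (algebraMap ℝ _ (h a)) := by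
    have convexity := hh.cfc_warith_pow_le hA (hY k) k
    rw [warith_A_Y] at convexity
    refine convexity.trans (add_le_add_right (smul_le_smul_of_nonneg_left ?_ (by positivity)) _)
    exact cfc_le_algebraMap_of_antitoneOn (hY k).isHermitian ha (haA.trans (A_le_Y k)) hanti
  have limit : Tendsto (fun k : ℕ ↦ warith (2⁻¹ ^ k) (cfc h A) (algebraMap ℝ _ (h a))) atTop
      (𝓝 (warith 0 (cfc h A) (algebraMap ℝ _ (h a)))) := by
    have continuous_warith : Continuous fun t ↦ warith t (cfc h A) (algebraMap ℝ _ (h a)) := by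
      unfold warith
      fun_prop
    exact (continuous_warith.tendsto 0).comp
      (tendsto_pow_atTop_nhds_zero_of_lt_one (by norm_num) (by norm_num))
  have warith_zero : warith 0 (cfc h A) (algebraMap ℝ _ (h a)) = cfc h A := by simp [warith]
  exact warith_zero ▸ ge_of_tendsto' limit bound

theorem operatorAntitone_iff_operatorLogConvex (hpos : ∀ x, 0 < x → 0 < h x) :
    OperatorAntitone h ↔ OperatorLogConvex h := by
  refine ⟨fun hh ↦ hh.operatorLogConvex hpos, fun hh ↦ ?_⟩
  have midpointConvex := hh.operatorMidpointConvex hpos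
  exact midpointConvex.operatorAntitone <|
    antitoneOn_Ioi_of_sq_le_mul_of_isBigO hpos (fun _ _ ↦ hh.sq_le_mul hpos)
      (midpointConvex.isBigO_sq hpos)

end LogConvex

section Duality

/-- The dual `x ↦ f(x⁻¹)⁻¹`, which exchanges harmonic and arithmetic means in the argument and
preserves geometric means of the values. -/
noncomputable def inverseDual (f : ℝ → ℝ) : ℝ → ℝ := fun x ↦ (f x⁻¹)⁻¹

variable {f : ℝ → ℝ}

lemma inverseDual_inverseDual (f : ℝ → ℝ) : inverseDual (inverseDual f) = f := by
  ext x
  simp only [inverseDual, inv_inv]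

lemma inverseDual_pos (hf : ∀ x, 0 < x → 0 < f x) (x : ℝ) (hx : 0 < x) : 0 < inverseDual f x :=
  inv_pos.2 (hf _ (inv_pos.2 hx))

lemma cfc_inverseDual {ι : Type*} [Fintype ι] [DecidableEq ι] {A : Matrix ι ι ℂ}
    (hf : ∀ x, 0 < x → 0 < f x) (hA : A.PosDef) : cfc (inverseDual f) A = (cfc f A⁻¹)⁻¹ := by
  rw [← cfc_comp_inv_of_posDef hA, ← cfc_inv_of_posDef hA fun x hx ↦ hf _ (inv_pos.2 hx)]
  rfl

lemma OperatorAntitone.inverseDual (hf : ∀ x, 0 < x → 0 < f x) (h : OperatorAntitone f) :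
    OperatorAntitone (inverseDual f) := by
  intro n A B hA hB hAB
  rw [cfc_inverseDual hf hA, cfc_inverseDual hf hB]
  exact inv_le_inv_of_posDef (posDef_cfc hA.inv hf) <|
    h n B⁻¹ A⁻¹ hB.inv hA.inv (inv_le_inv_of_posDef hA hAB)

lemma operatorAntitone_inverseDual_iff (hf : ∀ x, 0 < x → 0 < f x) :
    OperatorAntitone (inverseDual f) ↔ OperatorAntitone f := by
  refine ⟨fun h ↦ ?_, .inverseDual hf⟩
  simpa only [inverseDual_inverseDual] using h.inverseDual (inverseDual_pos hf)

lemma cfc_inverseDual_warith_le_wgeom_iff {n : ℕ} {A B : Matrix (Fin n) (Fin n) ℂ}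
    (hf : ∀ x, 0 < x → 0 < f x) (hA : A.PosDef) (hB : B.PosDef) {t : ℝ} (ht : t ∈ Set.Icc 0 1) :
    cfc (inverseDual f) (warith t A B) ≤
        wgeom t (cfc (inverseDual f) A) (cfc (inverseDual f) B) ↔
      wgeom t (cfc f A⁻¹) (cfc f B⁻¹) ≤ cfc f (wharm t A⁻¹ B⁻¹) := by
  have hW := posDef_warith ht hA hB
  have hA' := posDef_cfc hA.inv hf
  have hB' := posDef_cfc hB.inv hf
  rw [cfc_inverseDual hf hW, cfc_inverseDual hf hA, cfc_inverseDual hf hB, ← inv_wgeom hA' hB',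
    inv_le_inv_iff_of_posDef (posDef_cfc hW.inv hf) (posDef_wgeom hA' hB' t), wharm_inv_inv hA hB]

lemma operatorLogConvex_inverseDual_iff (hf : ∀ x, 0 < x → 0 < f x) :
    OperatorLogConvex (inverseDual f) ↔
      ∀ (n : ℕ) (A B : Matrix (Fin n) (Fin n) ℂ), A.PosDef → B.PosDef →
        MLE (wgeom 2⁻¹ (cfc f A) (cfc f B)) (cfc f (wharm 2⁻¹ A B)) := by
  constructor <;> intro h n A B hA hB
  · have key := (cfc_inverseDual_warith_le_wgeom_iff hf hA.inv hB.inv two_inv_mem_Icc).1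
      (h n _ _ hA.inv hB.inv)
    rwa [inv_inv_of_posDef hA, inv_inv_of_posDef hB] at key
  · exact (cfc_inverseDual_warith_le_wgeom_iff hf hA hB two_inv_mem_Icc).2
      (h n _ _ hA.inv hB.inv)

end Duality

theorem stmt_9_general (f : ℝ → ℝ) (hf : ∀ x ∈ Set.Ioi (0 : ℝ), f x ∈ Set.Ioi (0 : ℝ)) :
    OperatorAntitone f ↔
      ∀ (n : ℕ) (A B : Matrix (Fin n) (Fin n) ℂ), A.PosDef → B.PosDef →
        MLE (wgeom 2⁻¹ (cfc f A) (cfc f B)) (cfc f (wharm 2⁻¹ A B)) :=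
  calc OperatorAntitone f
      ↔ OperatorAntitone (inverseDual f) := (operatorAntitone_inverseDual_iff hf).symm
    _ ↔ OperatorLogConvex (inverseDual f) :=
        operatorAntitone_iff_operatorLogConvex (inverseDual_pos hf)
    _ ↔ _ := operatorLogConvex_inverseDual_iff hf

theorem stmt_9 (f : ℝ → ℝ) (hf : ContinuousOn f (Set.Ioi 0))
    (hf' : ∀ x ∈ Set.Ioi (0:ℝ), f x ∈ Set.Ioi (0:ℝ)) :
    OperatorAntitone f ↔
      ∀ (n : ℕ) (A B : Matrix (Fin n) (Fin n) ℂ), A.PosDef → B.PosDef →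
        MLE (wgeom 2⁻¹ (cfc f A) (cfc f B)) (cfc f (wharm 2⁻¹ A B)) :=
  stmt_9_general f hf'
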